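/- Let n ≥ 2 be even and let 0 ≤ θ_0 < θ_1 < ... < θ_{n-1} < 2π be real nodes. Define β_i(θ) = ((−1)^i cos((θ − θ_i)/2) Π_{k≠i} sin((θ − θ_k)/2)) / (Σ_{j=0}^{n-1} (−1)^j cos((θ − θ_j)/2) Π_{k≠j} sin((θ − θ_k)/2)) and the trigonometric Hermite basis b_{i,j}(θ) = (2^j/j!) sin^j((θ − θ_i)/2) · β_i(θ)^{j+1}. Then for all i, ℓ ∈ {0,...,n-1} and all j, k ∈ ℕ: the k-th iterated derivative of b_{i,j} at θ_ℓ equals 0 whenever k < j, and the j-th iterated derivative of b_{i,j} at θ_ℓ equals δ_{iℓ}. -/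

import Mathlib

open scoped BigOperators

/-- The pole-free form of Berrut's trigonometric basis function for even `n`. -/
noncomputable def berrutBasisEven (n : ℕ) (θ : Fin n → ℝ) (i : Fin n) (t : ℝ) : ℝ :=
  ((-1 : ℝ) ^ (i : ℕ) * Real.cos ((t - θ i) / 2) *
      ∏ k ∈ Finset.univ.erase i, Real.sin ((t - θ k) / 2)) /
    (∑ j : Fin n, (-1 : ℝ) ^ (j : ℕ) * Real.cos ((t - θ j) / 2) *
      ∏ k ∈ Finset.univ.erase j, Real.sin ((t - θ k) / 2))

/-- The trigonometric Hermite basis `b_{i,j}(θ) = (2^j/j!) sin^j((θ−θ_i)/2) β_i(θ)^(j+1)`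
for even `n`. -/
noncomputable def trigHermiteBasisEven (n : ℕ) (θ : Fin n → ℝ) (i : Fin n) (j : ℕ)
    (t : ℝ) : ℝ :=
  ((2 : ℝ) ^ j / (Nat.factorial j : ℝ)) * Real.sin ((t - θ i) / 2) ^ j *
    berrutBasisEven n θ i t ^ (j + 1)

/-!
Write `b_{i,j} = (1/j!) g ^ j β_i`, where `g = d_i β_i` and `d_i(t) = 2 sin((t - θ_i)/2)`. At a
node `θ_ℓ` only the term of index `ℓ` in the denominator of `β_i` survives, so `β_i` is smooth there
with `β_i(θ_ℓ) = δ_{iℓ}`. Hence `g` vanishes at every node, and each derivative of `b_{i,j}` of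
order below `j` retains a factor `g`. The `j`-th derivative at `θ_ℓ` equals
`g'(θ_ℓ) ^ j β_i(θ_ℓ)`, which is zero for `ℓ ≠ i`; for `ℓ = i` it is one because
`g'(θ_i) = d_i'(θ_i) β_i(θ_i) = 1`.
-/

section PowMul

open scoped Nat Topology

variable {𝕜 𝔸 : Type*} [NontriviallyNormedField 𝕜] [NormedCommRing 𝔸] [NormedAlgebra 𝕜 𝔸]
  {g h : 𝕜 → 𝔸} {a : 𝕜} {k j : ℕ}

theorem deriv_pow_succ_mul (m : ℕ) (hg : DifferentiableAt 𝕜 g a) (hh : DifferentiableAt 𝕜 h a) :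
    deriv (fun t ↦ g t ^ (m + 1) * h t) a =
      g a ^ m * ((m + 1) * deriv g a * h a + g a * deriv h a) := by
  rw [deriv_fun_mul (hg.fun_pow _) hh, deriv_fun_pow hg, Nat.add_sub_cancel]
  push_cast
  ring

theorem iteratedDeriv_succ_pow_succ_mul (m : ℕ) (hg : ContDiffAt 𝕜 (k + 1 : ℕ) g a)
    (hh : ContDiffAt 𝕜 (k + 1 : ℕ) h a) :
    iteratedDeriv (k + 1) (fun t ↦ g t ^ (m + 1) * h t) a =
      iteratedDeriv k
        (fun t ↦ g t ^ m * ((m + 1) * deriv g t * h t + g t * deriv h t)) a := by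
  have eventually_differentiableAt {f : 𝕜 → 𝔸} (hf : ContDiffAt 𝕜 (k + 1 : ℕ) f a) :
      ∀ᶠ t in 𝓝 a, DifferentiableAt 𝕜 f t :=
    (hf.eventually (by simp)).mono fun t ht ↦ ht.differentiableAt (by simp)
  rw [iteratedDeriv_succ']
  refine Filter.EventuallyEq.iteratedDeriv_eq k ?_
  filter_upwards [eventually_differentiableAt hg, eventually_differentiableAt hh] with t hgt hht
  exact deriv_pow_succ_mul m hgt hht

theorem contDiffAt_deriv_pow_succ_mul_cofactor (m : ℕ) (hg : ContDiffAt 𝕜 (k + 1 : ℕ) g a)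
    (hh : ContDiffAt 𝕜 (k + 1 : ℕ) h a) :
    ContDiffAt 𝕜 k (fun t ↦ (m + 1) * deriv g t * h t + g t * deriv h t) a := by
  have hkk : (k : WithTop ℕ∞) ≤ (k + 1 : ℕ) := by exact_mod_cast k.le_succ
  have hg' : ContDiffAt 𝕜 k (deriv g) a := hg.derivWithin (by simp)
  have hh' : ContDiffAt 𝕜 k (deriv h) a := hh.derivWithin (by simp)
  exact ((contDiffAt_const.mul hg').mul (hh.of_le hkk)).add ((hg.of_le hkk).mul hh')

theorem iteratedDeriv_pow_mul_of_lt (hga : g a = 0) (hkj : k < j)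
    (hg : ContDiffAt 𝕜 k g a) (hh : ContDiffAt 𝕜 k h a) :
    iteratedDeriv k (fun t ↦ g t ^ j * h t) a = 0 := by
  obtain ⟨m, rfl⟩ := Nat.exists_eq_add_one_of_ne_zero (Nat.ne_zero_of_lt hkj)
  induction k generalizing m h with
  | zero => simp [hga]
  | succ k ih =>
    obtain ⟨m, rfl⟩ := Nat.exists_eq_add_one_of_ne_zero (n := m) (by omega)
    rw [iteratedDeriv_succ_pow_succ_mul _ hg hh]
    exact ih (hg.of_le (by exact_mod_cast k.le_succ))
      (contDiffAt_deriv_pow_succ_mul_cofactor _ hg hh) m (by omega)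

theorem iteratedDeriv_pow_mul_self (hga : g a = 0)
    (hg : ContDiffAt 𝕜 j g a) (hh : ContDiffAt 𝕜 j h a) :
    iteratedDeriv j (fun t ↦ g t ^ j * h t) a = j ! * deriv g a ^ j * h a := by
  induction j generalizing h with
  | zero => simp
  | succ m ih =>
    rw [iteratedDeriv_succ_pow_succ_mul _ hg hh,
      ih (hg.of_le (by exact_mod_cast m.le_succ)) (contDiffAt_deriv_pow_succ_mul_cofactor _ hg hh),
      hga, Nat.factorial_succ]
    push_cast
    ring

end PowMul

section HermiteBasis

open scoped Nat

variable {𝕜 : Type*} [NontriviallyNormedField 𝕜] {d β : 𝕜 → 𝕜} {a : 𝕜} {k j : ℕ}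

/-- The `j`-th Hermite basis function `(1/j!) d ^ j β ^ (j + 1)` attached to a Lagrange-type basis
function `β` and a function `d` playing the role of the displacement from the node of `β`. -/
noncomputable def hermiteBasis (d β : 𝕜 → 𝕜) (j : ℕ) (t : 𝕜) : 𝕜 :=
  (j ! : 𝕜)⁻¹ * d t ^ j * β t ^ (j + 1)

theorem iteratedDeriv_hermiteBasis :
    iteratedDeriv k (hermiteBasis d β j) a =
      (j ! : 𝕜)⁻¹ * iteratedDeriv k (fun t ↦ (d t * β t) ^ j * β t) a := by
  rw [← iteratedDeriv_const_mul_field]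
  congr 1
  funext t
  rw [hermiteBasis]
  ring

theorem iteratedDeriv_hermiteBasis_of_lt (hdβ : d a * β a = 0) (hkj : k < j)
    (hd : ContDiffAt 𝕜 k d a) (hβ : ContDiffAt 𝕜 k β a) :
    iteratedDeriv k (hermiteBasis d β j) a = 0 := by
  rw [iteratedDeriv_hermiteBasis,
    iteratedDeriv_pow_mul_of_lt (g := fun t ↦ d t * β t) hdβ hkj (hd.mul hβ) hβ, mul_zero]

theorem iteratedDeriv_hermiteBasis_self [CharZero 𝕜] (hdβ : d a * β a = 0)
    (hd : ContDiffAt 𝕜 j d a) (hβ : ContDiffAt 𝕜 j β a) :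
    iteratedDeriv j (hermiteBasis d β j) a = deriv (fun t ↦ d t * β t) a ^ j * β a := by
  rw [iteratedDeriv_hermiteBasis,
    iteratedDeriv_pow_mul_self (g := fun t ↦ d t * β t) hdβ (hd.mul hβ) hβ, mul_assoc,
    inv_mul_cancel_left₀ (Nat.cast_ne_zero.mpr j.factorial_ne_zero)]

end HermiteBasis

theorem sin_half_sub_eq_zero_iff {x y : ℝ} :
    Real.sin ((x - y) / 2) = 0 ↔ (x : Real.Angle) = y := by
  rw [Real.sin_eq_zero_iff, Real.Angle.angle_eq_iff_two_pi_dvd_sub]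
  refine exists_congr fun m ↦ ?_
  constructor <;> intro h <;> linarith

theorem injOn_angle_coe_Ico : Set.InjOn ((↑) : ℝ → Real.Angle) (Set.Ico 0 (2 * Real.pi)) := by
  have : Fact (0 < 2 * Real.pi) := ⟨Real.two_pi_pos⟩
  rw [← zero_add (2 * Real.pi)]
  exact fun x hx y hy hxy ↦ (AddCircle.coe_eq_coe_iff_of_mem_Ico hx hy).mp hxy

theorem hasDerivAt_two_mul_sin_half_sub (a : ℝ) :
    HasDerivAt (fun t ↦ 2 * Real.sin ((t - a) / 2)) 1 a := by
  simpa using ((((hasDerivAt_id a).sub_const a).div_const 2).sin).const_mul 2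

section Berrut

variable {n : ℕ} {θ : Fin n → ℝ} {i ℓ : Fin n}

/-- The `i`-th term of the denominator of `berrutBasisEven`, which is also the numerator of the
`i`-th basis function. -/
noncomputable def berrutTerm (θ : Fin n → ℝ) (i : Fin n) (t : ℝ) : ℝ :=
  (-1) ^ (i : ℕ) * Real.cos ((t - θ i) / 2) * ∏ k ∈ Finset.univ.erase i, Real.sin ((t - θ k) / 2)

theorem berrutBasisEven_eq_div (t : ℝ) :
    berrutBasisEven n θ i t = berrutTerm θ i t / ∑ j, berrutTerm θ j t :=
  rfl

theorem contDiff_berrutTerm {m : WithTop ℕ∞} : ContDiff ℝ m (berrutTerm θ i) := by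
  have hcos : ContDiff ℝ m fun t ↦ (-1) ^ (i : ℕ) * Real.cos ((t - θ i) / 2) := by fun_prop
  exact hcos.mul (contDiff_prod fun k _ ↦ by fun_prop)

theorem berrutTerm_apply_node_of_ne (hi : i ≠ ℓ) : berrutTerm θ i (θ ℓ) = 0 :=
  mul_eq_zero_of_right _ <|
    Finset.prod_eq_zero (Finset.mem_erase.mpr ⟨hi.symm, Finset.mem_univ ℓ⟩) (by simp)

theorem sum_berrutTerm_apply_node : ∑ j, berrutTerm θ j (θ ℓ) = berrutTerm θ ℓ (θ ℓ) :=
  Fintype.sum_eq_single ℓ fun _ hj ↦ berrutTerm_apply_node_of_ne hj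

theorem berrutTerm_apply_node_self_ne_zero (hθ : Function.Injective fun k ↦ (θ k : Real.Angle)) :
    berrutTerm θ ℓ (θ ℓ) ≠ 0 := by
  refine mul_ne_zero (by simp) (Finset.prod_ne_zero_iff.mpr fun k hk ↦ ?_)
  exact sin_half_sub_eq_zero_iff.not.mpr (hθ.ne (Finset.ne_of_mem_erase hk).symm)

theorem berrutBasisEven_apply_node (hθ : Function.Injective fun k ↦ (θ k : Real.Angle)) :
    berrutBasisEven n θ i (θ ℓ) = if i = ℓ then 1 else 0 := by
  rw [berrutBasisEven_eq_div, sum_berrutTerm_apply_node]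
  split_ifs with hi
  · rw [hi, div_self (berrutTerm_apply_node_self_ne_zero hθ)]
  · rw [berrutTerm_apply_node_of_ne hi, zero_div]

theorem contDiffAt_berrutBasisEven_node (hθ : Function.Injective fun k ↦ (θ k : Real.Angle))
    {m : WithTop ℕ∞} : ContDiffAt ℝ m (berrutBasisEven n θ i) (θ ℓ) := by
  have hsum : ContDiff ℝ m fun t ↦ ∑ j, berrutTerm θ j t :=
    ContDiff.sum fun _ _ ↦ contDiff_berrutTerm
  have hsum_ne : ∑ j, berrutTerm θ j (θ ℓ) ≠ 0 :=
    sum_berrutTerm_apply_node.trans_ne (berrutTerm_apply_node_self_ne_zero hθ)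
  exact contDiff_berrutTerm.contDiffAt.div hsum.contDiffAt hsum_ne

theorem two_mul_sin_mul_berrutBasisEven_apply_node
    (hθ : Function.Injective fun k ↦ (θ k : Real.Angle)) :
    2 * Real.sin ((θ ℓ - θ i) / 2) * berrutBasisEven n θ i (θ ℓ) = 0 := by
  rw [berrutBasisEven_apply_node hθ]
  split_ifs with hi <;> simp [hi]

theorem deriv_two_mul_sin_mul_berrutBasisEven_node
    (hθ : Function.Injective fun k ↦ (θ k : Real.Angle)) :
    deriv (fun t ↦ 2 * Real.sin ((t - θ i) / 2) * berrutBasisEven n θ i t) (θ i) = 1 := by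
  have hβ : DifferentiableAt ℝ (berrutBasisEven n θ i) (θ i) :=
    (contDiffAt_berrutBasisEven_node hθ).differentiableAt one_ne_zero
  have hd := hasDerivAt_two_mul_sin_half_sub (θ i)
  rw [deriv_fun_mul hd.differentiableAt hβ, hd.deriv, berrutBasisEven_apply_node hθ]
  simp

theorem trigHermiteBasisEven_eq_hermiteBasis (j : ℕ) :
    trigHermiteBasisEven n θ i j =
      hermiteBasis (fun t ↦ 2 * Real.sin ((t - θ i) / 2)) (berrutBasisEven n θ i) j := by
  funext t
  rw [trigHermiteBasisEven, hermiteBasis, mul_pow]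
  ring

end Berrut

theorem trigHermiteBasisEven_property_general {n : ℕ} {θ : Fin n → ℝ}
    (hθ : Function.Injective fun k ↦ (θ k : Real.Angle)) (i ℓ : Fin n) (j k : ℕ) :
    (k < j → iteratedDeriv k (trigHermiteBasisEven n θ i j) (θ ℓ) = 0) ∧
      iteratedDeriv j (trigHermiteBasisEven n θ i j) (θ ℓ) = if i = ℓ then 1 else 0 := by
  have hd {m : ℕ} : ContDiffAt ℝ m (fun t ↦ 2 * Real.sin ((t - θ i) / 2)) (θ ℓ) := by fun_prop
  have hdβ := two_mul_sin_mul_berrutBasisEven_apply_node hθ (i := i) (ℓ := ℓ)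
  rw [trigHermiteBasisEven_eq_hermiteBasis]
  refine ⟨fun hkj ↦ iteratedDeriv_hermiteBasis_of_lt hdβ hkj hd
    (contDiffAt_berrutBasisEven_node hθ), ?_⟩
  rw [iteratedDeriv_hermiteBasis_self hdβ hd (contDiffAt_berrutBasisEven_node hθ),
    berrutBasisEven_apply_node hθ]
  split_ifs with hi
  · rw [← hi, deriv_two_mul_sin_mul_berrutBasisEven_node hθ, one_pow, one_mul]
  · rw [mul_zero]

/-- for even `n`, the trigonometric Hermite basis satisfies
`b_{i,j}^{(k)}(θ_ℓ) = 0` for `k < j` and `b_{i,j}^{(j)}(θ_ℓ) = δ_{iℓ}`. -/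
theorem trigHermiteBasisEven_property
    (n : ℕ) (hn : 2 ≤ n) (heven : Even n)
    (θ : Fin n → ℝ) (hθ : StrictMono θ)
    (hθ0 : ∀ k, 0 ≤ θ k) (hθ2π : ∀ k, θ k < 2 * Real.pi) :
    ∀ (i ℓ : Fin n) (j k : ℕ),
      (k < j → iteratedDeriv k (trigHermiteBasisEven n θ i j) (θ ℓ) = 0) ∧
      iteratedDeriv j (trigHermiteBasisEven n θ i j) (θ ℓ)
        = if i = ℓ then 1 else 0 :=
  trigHermiteBasisEven_property_general fun k l hkl ↦
    hθ.injective (injOn_angle_coe_Ico ⟨hθ0 k, hθ2π k⟩ ⟨hθ0 l, hθ2π l⟩ hkl)
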